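/- arXiv:2212.03493 — 2 statements merged into one kernel-verified Lean document; each statement's English description precedes it below -/
import Mathlib

section
/- Let 0 < α < 1, β ∈ ℝ, and let μ satisfy απ/2 < μ < min{π, απ}. Then there exists a constant C = C(α, β, μ) > 0 such that |E_{α,β}(z)| ≤ C / (1 + |z|) for all nonzero z ∈ ℂ with μ ≤ |arg(z)| ≤ π. -/
/-- The Mittag-Leffler function `E_{α,β}(z) = ∑ₖ zᵏ / Γ(αk + β)` (with the
convention that `1/Γ` vanishes at the poles of `Γ`, which holds for Mathlib's
`Complex.Gamma` since it vanishes at nonpositive integers). -/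
noncomputable def mittagLeffler (α β : ℝ) (z : ℂ) : ℂ :=
  ∑' k : ℕ, z ^ k / Complex.Gamma ((α * k + β : ℝ) : ℂ)

open Complex MeasureTheory Set Filter Topology

namespace MLaux

lemma geom_aux {a b x y : ℝ} (ha : 0 ≤ a) (hab : a < b) (hb : b < Real.pi)
    (hx : b ≤ |x|) (hx' : |x| ≤ Real.pi) (hy : |y| ≤ a) : Real.cos (x - y) ≤ Real.cos (b - a) := by
  have key : ∀ x y : ℝ, b ≤ x → x ≤ Real.pi → |y| ≤ a → Real.cos (x - y) ≤ Real.cos (b - a) := by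
    intro x y h1 h2 h3
    have := abs_le.1 h3
    rcases le_total (x - y) Real.pi with h | h
    · exact Real.cos_le_cos_of_nonneg_of_le_pi (by linarith) h (by linarith)
    · rw [← Real.cos_two_pi_sub]
      exact Real.cos_le_cos_of_nonneg_of_le_pi (by linarith) (by linarith) (by linarith)
  rcases abs_cases x with ⟨h, _⟩ | ⟨h, _⟩
  · exact key x y (by linarith) (by linarith) hy
  · rw [← Real.cos_neg, show -(x - y) = (-x) - (-y) by ring]
    exact key (-x) (-y) (by linarith) (by linarith) (by rwa [abs_neg])

lemma norm_sub_sq_aux (z w : ℂ) : ‖z - w‖ ^ 2 =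
    ‖z‖ ^ 2 + ‖w‖ ^ 2 - 2 * ‖z‖ * ‖w‖ * Real.cos (arg z - arg w) := by
  rw [Real.cos_sub]
  have h1 := norm_mul_cos_arg z
  have h2 := norm_mul_sin_arg z
  have h3 := norm_mul_cos_arg w
  have h4 := norm_mul_sin_arg w
  have : 2 * ‖z‖ * ‖w‖ * (Real.cos z.arg * Real.cos w.arg + Real.sin z.arg * Real.sin w.arg)
    = 2 * (z.re * w.re + z.im * w.im) := by
    rw [← h1, ← h2, ← h3, ← h4]; ring
  rw [this]
  simp only [← normSq_eq_norm_sq, normSq_apply, sub_re, sub_im]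
  ring

lemma geom {a b : ℝ} (ha : 0 ≤ a) (hab : a < b) (hb : b < Real.pi) (z w : ℂ)
    (hz : b ≤ |arg z|) (hw : |arg w| ≤ a) :
    Real.sin (b - a) * ‖z‖ ≤ ‖z - w‖ ∧ Real.sin (b - a) * ‖w‖ ≤ ‖z - w‖ := by
  have hc := geom_aux ha hab hb hz (abs_arg_le_pi z) hw
  have h := norm_sub_sq_aux z w
  have hzw : 0 ≤ ‖z‖ * ‖w‖ := by positivity
  have h2 : ‖z‖ ^ 2 + ‖w‖ ^ 2 - 2 * ‖z‖ * ‖w‖ * Real.cos (b - a) ≤ ‖z - w‖ ^ 2 := by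
    rw [h]; nlinarith
  have hs := Real.sin_sq_add_cos_sq (b - a)
  constructor
  · apply le_of_sq_le_sq _ (norm_nonneg _)
    nlinarith [sq_nonneg (‖w‖ - ‖z‖ * Real.cos (b - a))]
  · apply le_of_sq_le_sq _ (norm_nonneg _)
    nlinarith [sq_nonneg (‖z‖ - ‖w‖ * Real.cos (b - a))]

lemma sin_pos_aux {a b : ℝ} (ha : 0 ≤ a) (hab : a < b) (hb : b < Real.pi) :
    0 < Real.sin (b - a) := Real.sin_pos_of_pos_of_lt_pi (by linarith) (by linarith)

def U (μ : ℝ) : Set ℂ := {z | μ < |arg z|}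

lemma isOpen_U {μ : ℝ} (h0 : 0 ≤ μ) : IsOpen (U μ) := by
  rw [Metric.isOpen_iff]
  intro z hz
  have hz' : μ < |arg z| := hz
  have hpi := abs_arg_le_pi z
  have hz0 : z ≠ 0 := by
    rintro rfl
    simp at hz'
    linarith
  set b := (μ + |arg z|) / 2 with hb
  have h1 : μ < b := by linarith
  have h2 : b < Real.pi := by linarith
  have h3 : b ≤ |arg z| := by linarith
  have hs := sin_pos_aux h0 h1 h2
  refine ⟨Real.sin (b - μ) * ‖z‖, by positivity, fun w hw => ?_⟩
  by_contra hcon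
  have hcon' : |arg w| ≤ μ := not_lt.1 hcon
  have := (geom h0 h1 h2 z w h3 hcon').1
  rw [Metric.mem_ball, dist_comm, dist_eq_norm] at hw
  linarith

lemma isPreconnected_U {μ : ℝ} (h0 : 0 ≤ μ) : IsPreconnected (U μ) := by
  have : U μ = (fun p : ℝ × ℝ => (p.1 : ℂ) * exp (p.2 * I)) ''
      (Ioi (0 : ℝ) ×ˢ Ioo μ (2 * Real.pi - μ)) := by
    ext z
    constructor
    · intro hz
      have hz' : μ < |arg z| := hz
      have hpi := abs_arg_le_pi z
      have hz0 : z ≠ 0 := by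
        rintro rfl
        simp at hz'
        linarith
      have hp := Real.pi_pos
      rcases abs_cases (arg z) with ⟨h, _⟩ | ⟨h, _⟩
      · exact ⟨(‖z‖, arg z), ⟨norm_pos_iff.2 hz0, by linarith, by simp only; linarith⟩,
          norm_mul_exp_arg_mul_I z⟩
      · refine ⟨(‖z‖, arg z + 2 * Real.pi),
          ⟨norm_pos_iff.2 hz0, by simp only; linarith, by simp only; linarith⟩, ?_⟩
        simp only
        push_cast
        rw [add_mul, exp_add, exp_two_pi_mul_I, mul_one]
        exact norm_mul_exp_arg_mul_I z
    · rintro ⟨⟨r, φ⟩, ⟨hr, hφ1, hφ2⟩, rfl⟩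
      simp only at hr hφ1 hφ2 ⊢
      have hr : 0 < r := hr
      show μ < |arg _|
      rw [arg_real_mul _ hr]
      rcases le_or_gt φ Real.pi with h | h
      · rw [arg_exp_mul_I, (toIocMod_eq_self _).2 ⟨by linarith, by linarith⟩, abs_of_nonneg] <;> linarith
      · have : exp (φ * I) = exp (((φ - 2 * Real.pi : ℝ) : ℂ) * I) := by
          push_cast
          rw [sub_mul, exp_sub, exp_two_pi_mul_I, div_one]
        rw [this, arg_exp_mul_I, (toIocMod_eq_self _).2 ⟨by linarith, by linarith⟩, abs_of_nonpos] <;> linarith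
  rw [this]
  apply IsPreconnected.image
  · exact isPreconnected_Ioi.prod isPreconnected_Ioo
  · fun_prop

lemma arg_cpow_le {α : ℝ} (h0 : 0 < α) (h1 : α < 1) {t : ℂ} (ht : 0 < t.re) :
    |arg (t ^ (α : ℂ))| ≤ α * Real.pi / 2 := by
  have ht0 : t ≠ 0 := by rintro rfl; simp at ht
  have ha : |arg t| ≤ Real.pi / 2 := abs_arg_le_pi_div_two_iff.2 ht.le
  have hp := Real.pi_pos
  have hh := abs_le.1 ha
  have e : (log t * α).im = α * arg t := by simp [mul_comm, log_im]
  have : arg (t ^ (α : ℂ)) = α * arg t := by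
    rw [cpow_def_of_ne_zero ht0, ← log_im, log_exp, e]
    · rw [e]; nlinarith
    · rw [e]; nlinarith
  rw [this, abs_mul, abs_of_pos h0]
  nlinarith

/-- Laplace transform with complex parameter. -/
lemma laplace {s : ℝ} (hs : 0 < s) {r : ℂ} (hr : 0 < r.re) :
    ∫ t in Ioi (0 : ℝ), (t : ℂ) ^ ((s : ℂ) - 1) * exp (-(r * t)) =
      (1 / r) ^ (s : ℂ) * Gamma s := by
  set H : Set ℂ := {r | 0 < r.re} with hH
  have hHo : IsOpen H := isOpen_lt continuous_const continuous_re
  have hHc : IsPreconnected H := (convex_halfSpace_re_gt 0).isPreconnected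
  have hn : ∀ (r : ℂ) (t : ℝ), t ∈ Ioi (0:ℝ) →
      ‖(t : ℂ) ^ ((s : ℂ) - 1) * exp (-(r * t))‖ = t ^ (s - 1) * Real.exp (-r.re * t ^ (1:ℝ)) := by
    intro r t ht
    have ht : 0 < t := ht
    rw [norm_mul, norm_exp, norm_cpow_eq_rpow_re_of_pos ht]
    simp
  have hm : ∀ (r : ℂ), AEStronglyMeasurable
      (fun t : ℝ => (t : ℂ) ^ ((s : ℂ) - 1) * exp (-(r * t))) (volume.restrict (Ioi 0)) := by
    intro r
    refine ContinuousOn.aestronglyMeasurable (fun t ht => ?_) measurableSet_Ioi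
    have ht : 0 < t := ht
    apply ContinuousAt.continuousWithinAt
    apply ContinuousAt.mul
    · exact (continuousAt_ofReal_cpow_const _ _ (Or.inr ht.ne'))
    · fun_prop
  have hint : ∀ r ∈ H, IntegrableOn
      (fun t : ℝ => (t : ℂ) ^ ((s : ℂ) - 1) * exp (-(r * t))) (Ioi 0) := by
    intro r hr
    refine Integrable.mono' (integrableOn_rpow_mul_exp_neg_mul_rpow (s := s - 1)
      (by linarith) one_pos hr) (hm r) ?_
    exact (ae_restrict_mem measurableSet_Ioi).mono fun t ht => (hn r t ht).le
  have hF : DifferentiableOn ℂ (fun r : ℂ => ∫ t in Ioi (0 : ℝ),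
      (t : ℂ) ^ ((s : ℂ) - 1) * exp (-(r * t))) H := by
    intro r hr
    have hr : 0 < r.re := hr
    have hnb : {r' : ℂ | r.re / 2 < r'.re} ∈ 𝓝 r :=
      (isOpen_lt continuous_const continuous_re).mem_nhds (by simp only [mem_ofPred_eq]; linarith)
    have := hasDerivAt_integral_of_dominated_loc_of_deriv_le
      (μ := volume.restrict (Ioi (0:ℝ)))
      (F := fun (r : ℂ) (t : ℝ) => (t : ℂ) ^ ((s : ℂ) - 1) * exp (-(r * t)))
      (F' := fun (r : ℂ) (t : ℝ) => ((t : ℂ) ^ ((s : ℂ) - 1) * exp (-(r * t))) * (-t))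
      (bound := fun t => t ^ s * Real.exp (-(r.re / 2) * t ^ (1:ℝ))) hnb
      (Eventually.of_forall hm) (hint r hr) ((hm r).mul (by fun_prop)) ?_
      (integrableOn_rpow_mul_exp_neg_mul_rpow (by linarith) one_pos (by linarith)) ?_
    · exact this.2.differentiableAt.differentiableWithinAt
    · refine (ae_restrict_mem measurableSet_Ioi).mono fun t ht r' hr' => ?_
      have ht0 : 0 < t := ht
      have hr' : r.re / 2 < r'.re := hr'
      rw [norm_mul, hn r' t ht, norm_neg, norm_real, Real.norm_of_nonneg ht0.le]
      have : t ^ s = t ^ (s - 1) * t := by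
        rw [← Real.rpow_add_one ht0.ne']; congr 1; ring
      rw [this, mul_right_comm]
      gcongr
    · refine Eventually.of_forall fun t r' _ => ?_
      have h1 : HasDerivAt (fun r : ℂ => -(r * t)) (-t) r' := by
        simpa using ((hasDerivAt_id r').mul_const (t : ℂ)).fun_neg
      simpa [mul_assoc] using (h1.cexp).const_mul ((t : ℂ) ^ ((s : ℂ) - 1))
  have hG : DifferentiableOn ℂ (fun r : ℂ => (1 / r) ^ (s : ℂ) * Gamma s) H := by
    intro r hr
    have hr : 0 < r.re := hr
    have hr0 : r ≠ 0 := by rintro rfl; simp at hr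
    apply DifferentiableAt.differentiableWithinAt
    refine DifferentiableAt.mul_const (DifferentiableAt.cpow_const ?_ ?_) _
    · exact (differentiableAt_const _).div differentiableAt_id hr0
    · left
      rw [one_div, inv_re]
      have := normSq_pos.2 hr0
      positivity
  have hfreq : ∃ᶠ r in 𝓝[≠] (1 : ℂ), (fun r : ℂ => ∫ t in Ioi (0 : ℝ),
      (t : ℂ) ^ ((s : ℂ) - 1) * exp (-(r * t))) r = (fun r : ℂ => (1 / r) ^ (s : ℂ) * Gamma s) r := by
    have ht : Tendsto (fun x : ℝ => (x : ℂ)) (𝓝[≠] (1:ℝ)) (𝓝[≠] (1 : ℂ)) := by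
      apply tendsto_nhdsWithin_of_tendsto_nhds_of_eventually_within
      · exact (continuous_ofReal.tendsto' 1 1 (by simp)).mono_left nhdsWithin_le_nhds
      · filter_upwards [self_mem_nhdsWithin] with x hx
        simpa using hx
    apply ht.frequently
    apply Eventually.frequently
    filter_upwards [nhdsWithin_le_nhds (lt_mem_nhds (zero_lt_one' ℝ))] with x hx
    exact integral_cpow_mul_exp_neg_mul_Ioi (by simpa using hs) hx
  exact (hF.analyticOnNhd hHo).eqOn_of_preconnected_of_frequently_eq (hG.analyticOnNhd hHo) hHc
    (by simp [hH]) hfreq hr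

/-- The point on the vertical contour. -/
noncomputable def T (c w : ℝ) : ℂ := c + (2 * Real.pi * w : ℝ) * I

lemma T_re (c w : ℝ) : (T c w).re = c := by simp [T]
lemma T_im (c w : ℝ) : (T c w).im = 2 * Real.pi * w := by simp [T]

lemma T_ne {c : ℝ} (hc : 0 < c) (w : ℝ) : T c w ≠ 0 := by
  intro h
  have := T_re c w
  rw [h] at this
  simp at this
  linarith

lemma T_cont (c : ℝ) : Continuous (T c) := by unfold T; fun_prop

lemma T_norm_ge {c : ℝ} (hc : 0 < c) (w : ℝ) : c ≤ ‖T c w‖ := by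
  have := abs_re_le_norm (T c w)
  rwa [T_re, abs_of_pos hc] at this

lemma T_slit {c : ℝ} (hc : 0 < c) (w : ℝ) : T c w ∈ slitPlane := Or.inl (by rwa [T_re])

lemma T_cpow_cont {c : ℝ} (hc : 0 < c) (s : ℂ) : Continuous (fun w => T c w ^ s) :=
  (T_cont c).cpow continuous_const (fun w => T_slit hc w)

lemma norm_T_cpow {c : ℝ} (hc : 0 < c) (w s : ℝ) : ‖T c w ^ (s : ℂ)‖ = ‖T c w‖ ^ s := by
  rw [norm_cpow_of_imp] <;> simp [T_ne hc w]

lemma integrable_T2 {c : ℝ} (hc : 0 < c) : Integrable (fun w => ‖T c w‖ ^ (-2 : ℝ)) := by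
  have h := (integrable_inv_one_add_sq.comp_mul_left' (R := 2 * Real.pi / c)
    (by positivity)).const_mul ((c ^ 2)⁻¹)
  refine h.congr (Eventually.of_forall fun w => ?_)
  have : ‖T c w‖ ^ 2 = c ^ 2 + (2 * Real.pi * w) ^ 2 := by
    rw [← normSq_eq_norm_sq, normSq_apply, T_re, T_im]; ring
  simp only
  rw [Real.rpow_neg (norm_nonneg _), Real.rpow_two, this, ← mul_inv]
  congr 1
  field_simp

lemma T_rpow_le {c : ℝ} (hc : 0 < c) (w : ℝ) {s : ℝ} (hs : 2 ≤ s) :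
    ‖T c w‖ ^ (-s) ≤ c ^ (2 - s) * ‖T c w‖ ^ (-2 : ℝ) := by
  have h0 : 0 < ‖T c w‖ := norm_pos_iff.2 (T_ne hc w)
  have : ‖T c w‖ ^ (-s) = ‖T c w‖ ^ (2 - s) * ‖T c w‖ ^ (-2 : ℝ) := by
    rw [← Real.rpow_add h0]; congr 1; ring
  rw [this]
  gcongr ?_ * _
  exact Real.rpow_le_rpow_of_nonpos hc (T_norm_ge hc w) (by linarith)

lemma integrable_Ts {c : ℝ} (hc : 0 < c) {s : ℝ} (hs : 2 ≤ s) :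
    Integrable (fun w => T c w ^ (-(s : ℂ))) := by
  refine Integrable.mono' ((integrable_T2 hc).const_mul (c ^ (2 - s)))
    (T_cpow_cont hc _).aestronglyMeasurable (Eventually.of_forall fun w => ?_)
  have := norm_T_cpow hc w (-s)
  push_cast at this
  rw [this]
  exact T_rpow_le hc w hs

open FourierTransform in
/-- Laplace inversion formula for the reciprocal Gamma function. -/
lemma inv_Gamma {c : ℝ} (hc : 0 < c) {s : ℝ} (hs : 2 ≤ s) :
    (Gamma s)⁻¹ = ∫ w : ℝ, exp (T c w) * T c w ^ (-(s : ℂ)) := by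
  set g : ℝ → ℂ := fun t => (t : ℂ) ^ ((s : ℂ) - 1) * exp (-(c * t)) with hg
  set f : ℝ → ℂ := (Ioi (0 : ℝ)).indicator g with hf
  have hgi : IntegrableOn g (Ioi 0) := by
    refine Integrable.mono' (integrableOn_rpow_mul_exp_neg_mul_rpow (s := s - 1)
      (by linarith) one_pos hc) ?_ ?_
    · refine ContinuousOn.aestronglyMeasurable (fun t ht => ?_) measurableSet_Ioi
      have ht : 0 < t := ht
      apply ContinuousAt.continuousWithinAt
      apply ContinuousAt.mul
      · exact (continuousAt_ofReal_cpow_const _ _ (Or.inr ht.ne'))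
      · fun_prop
    · refine (ae_restrict_mem measurableSet_Ioi).mono fun t ht => ?_
      have ht : 0 < t := ht
      rw [hg]
      simp only
      rw [norm_mul, norm_exp, norm_cpow_eq_rpow_re_of_pos ht]
      simp
  have hfi : Integrable f := hgi.integrable_indicator measurableSet_Ioi
  have hF : 𝓕 f = fun w => T c w ^ (-(s : ℂ)) * Gamma s := by
    ext w
    rw [Real.fourier_real_eq_integral_exp_smul]
    have h1 : (fun v : ℝ => exp (↑(-2 * Real.pi * v * w) * I) • f v) = (Ioi (0:ℝ)).indicator
        (fun t : ℝ => (t : ℂ) ^ ((s : ℂ) - 1) * exp (-(T c w * t))) := by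
      ext v
      by_cases hv : v ∈ Ioi (0:ℝ)
      · simp only [hf, indicator_of_mem hv, hg, smul_eq_mul]
        rw [mul_left_comm, ← exp_add]
        congr 2
        simp only [T]; push_cast; ring
      · simp only [hf, indicator_of_notMem hv, smul_zero]
    rw [h1, integral_indicator measurableSet_Ioi, laplace (by linarith) (by rwa [T_re])]
    congr 1
    rw [one_div, inv_cpow, cpow_neg]
    exact (mem_slitPlane_iff_arg.1 (T_slit hc w)).1
  have hinv := hfi.fourierInv_fourier_eq (v := 1) (by rw [hF]; exact (integrable_Ts hc hs).mul_const _) ?_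
  · have hf1 : f 1 = exp (-c) := by simp [hf, hg]
    rw [hf1, hF, Real.fourierInv_eq'] at hinv
    have hG : Gamma s ≠ 0 := Gamma_ne_zero_of_re_pos (by simp; linarith)
    have e : (fun w : ℝ => exp (T c w) * T c w ^ (-(s : ℂ))) =
        fun w : ℝ => (exp c * (Gamma s)⁻¹) *
          (exp (↑(2 * Real.pi * inner ℝ w 1) * I) • (T c w ^ (-(s : ℂ)) * Gamma s)) := by
      ext w
      have : exp (T c w) = exp c * exp (↑(2 * Real.pi * inner ℝ w 1) * I) := by
        rw [← exp_add]; simp [T]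
      rw [this, smul_eq_mul]
      field_simp
    rw [e, integral_const_mul, hinv, mul_right_comm, ← exp_add]
    simp
  · have : f =ᶠ[𝓝 1] g := by
      filter_upwards [lt_mem_nhds (zero_lt_one' ℝ)] with x hx
      exact indicator_of_mem (mem_Ioi.2 hx) g
    rw [continuousAt_congr this]
    apply ContinuousAt.mul
    · exact (continuousAt_ofReal_cpow_const _ _ (Or.inr one_ne_zero))
    · fun_prop

lemma inv_Gamma_le {c : ℝ} (hc : 0 < c) : ∃ K : ℝ, 0 ≤ K ∧ ∀ s : ℝ, 2 ≤ s →
    ‖(Gamma s)⁻¹‖ ≤ K * c ^ (-s) := by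
  refine ⟨Real.exp c * c ^ 2 * ∫ w, ‖T c w‖ ^ (-2 : ℝ), ?_, fun s hs => ?_⟩
  · have : 0 ≤ ∫ w, ‖T c w‖ ^ (-2 : ℝ) := integral_nonneg fun w => by positivity
    positivity
  rw [inv_Gamma hc hs]
  have h := norm_integral_le_of_norm_le (f := fun w : ℝ => exp (T c w) * T c w ^ (-(s : ℂ)))
    ((integrable_T2 hc).const_mul (Real.exp c * c ^ (2 - s)))
    (Eventually.of_forall fun w => ?_)
  · rw [integral_const_mul] at h
    refine h.trans (le_of_eq ?_)
    rw [Real.rpow_sub hc, Real.rpow_neg hc.le, Real.rpow_two]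
    ring
  · have := norm_T_cpow hc w (-s)
    push_cast at this
    rw [norm_mul, norm_exp, T_re, this, mul_assoc]
    gcongr
    exact T_rpow_le hc w hs

lemma summable_aux {α : ℝ} (hα : 0 < α) (β : ℝ) {R : ℝ} (hR : 0 ≤ R) :
    Summable (fun k : ℕ => R ^ k * ‖(Gamma ((α * k + β : ℝ) : ℂ))⁻¹‖) := by
  set c : ℝ := (2 * R + 1) ^ (1 / α) with hcdef
  have hc : 0 < c := by positivity
  have hcα : c ^ α = 2 * R + 1 := by
    rw [hcdef, ← Real.rpow_mul (by positivity), one_div_mul_cancel hα.ne', Real.rpow_one]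
  obtain ⟨K, hK, h⟩ := inv_Gamma_le hc
  have hlt : R / (2 * R + 1) < 1 := by rw [div_lt_one (by positivity)]; linarith
  have hsum : Summable (fun k : ℕ => K * c ^ (-β) * (R / (2 * R + 1)) ^ k) :=
    (summable_geometric_of_lt_one (by positivity) hlt).mul_left _
  refine Summable.of_norm_bounded_eventually_nat hsum ?_
  obtain ⟨N, hN⟩ := exists_nat_gt ((2 - β) / α)
  filter_upwards [eventually_ge_atTop N] with k hk
  have hk' : (N : ℝ) ≤ k := by exact_mod_cast hk
  have h2 : 2 ≤ α * k + β := by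
    rw [div_lt_iff₀ hα] at hN
    nlinarith
  have := h _ h2
  rw [Real.norm_of_nonneg (by positivity)]
  calc _ ≤ R ^ k * (K * c ^ (-(α * k + β))) := by gcongr
    _ = _ := by
      rw [neg_add, Real.rpow_add hc, Real.rpow_neg hc.le (α * k), Real.rpow_mul hc.le, hcα,
        Real.rpow_natCast, div_pow]
      field_simp

lemma term_bound (α β : ℝ) {R : ℝ} (k : ℕ) (w : ℂ) (hw : w ∈ Metric.ball (0:ℂ) R) :
    ‖w ^ k / Gamma ((α * k + β : ℝ) : ℂ)‖ ≤ R ^ k * ‖(Gamma ((α * k + β : ℝ) : ℂ))⁻¹‖ := by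
  rw [div_eq_mul_inv, norm_mul, norm_pow]
  have : ‖w‖ < R := by simpa using hw
  gcongr

lemma ml_diff {α : ℝ} (hα : 0 < α) (β : ℝ) : Differentiable ℂ (mittagLeffler α β) := by
  intro z
  have h := differentiableOn_tsum_of_summable_norm (U := Metric.ball (0:ℂ) (‖z‖ + 1))
    (F := fun (k : ℕ) (w : ℂ) => w ^ k / Gamma ((α * k + β : ℝ) : ℂ))
    (summable_aux hα β (R := ‖z‖ + 1) (by positivity)) (fun k => by fun_prop) Metric.isOpen_ball
    (fun k w hw => term_bound α β k w hw)
  exact h.differentiableAt (Metric.isOpen_ball.mem_nhds (by simp))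

lemma ml_summable {α : ℝ} (hα : 0 < α) (β : ℝ) (z : ℂ) :
    Summable (fun k : ℕ => z ^ k / Gamma ((α * k + β : ℝ) : ℂ)) :=
  Summable.of_norm_bounded (summable_aux hα β (R := ‖z‖ + 1) (by positivity))
    (fun k => term_bound α β k z (by simp))

lemma ml_rec {α : ℝ} (hα : 0 < α) (β : ℝ) (z : ℂ) : mittagLeffler α β z =
    β * mittagLeffler α (β + 1) z + α * z * deriv (mittagLeffler α (β + 1)) z := by
  have h := hasSum_deriv_of_summable_norm (U := Metric.ball (0:ℂ) (‖z‖ + 1)) (z := z)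
    (F := fun (k : ℕ) (w : ℂ) => w ^ k / Gamma ((α * k + (β + 1) : ℝ) : ℂ))
    (summable_aux hα (β + 1) (R := ‖z‖ + 1) (by positivity)) (fun k => by fun_prop)
    Metric.isOpen_ball (fun k w hw => term_bound α (β + 1) k w hw) (by simp)
  have h1 := ((ml_summable hα (β + 1) z).hasSum.mul_left (β : ℂ)).add (h.mul_left (α * z))
  refine Eq.trans ?_ h1.tsum_eq
  refine tsum_congr fun k => ?_
  rw [div_eq_mul_inv, one_div_Gamma_eq_self_mul_one_div_Gamma_add_one]
  have e : (((α * k + β : ℝ) : ℂ) + 1) = ((α * k + (β + 1) : ℝ) : ℂ) := by push_cast; ring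
  rw [e]
  have hd : deriv (fun w : ℂ => w ^ k / Gamma ((α * k + (β + 1) : ℝ) : ℂ)) z =
      k * z ^ (k - 1) / Gamma ((α * k + (β + 1) : ℝ) : ℂ) := by
    rw [deriv_div_const]; simp
  rw [hd]
  have hz : (k : ℂ) * z ^ k = z * (k * z ^ (k - 1)) := by
    rcases k with _ | k
    · simp
    · simp [pow_succ]; ring
  generalize (Gamma ((α * k + (β + 1) : ℝ) : ℂ)) = G
  push_cast
  rw [div_eq_mul_inv, div_eq_mul_inv]
  linear_combination (α * G⁻¹) * hz

lemma base {α β : ℝ} (h0 : 0 < α) (h1 : α < 1) (hβ : 3 ≤ β) {μ : ℝ}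
    (hμ1 : α * Real.pi / 2 < μ) (hμ2 : μ < Real.pi) :
    ∃ C : ℝ, 0 < C ∧ ∀ z : ℂ, μ ≤ |arg z| → ‖mittagLeffler α β z‖ ≤ C / (1 + ‖z‖) := by
  have hp := Real.pi_pos
  have ha0 : 0 ≤ α * Real.pi / 2 := by positivity
  obtain ⟨b, hb1, hb2⟩ := exists_between hμ1
  have hbpi : b < Real.pi := hb2.trans hμ2
  set d := Real.sin (b - α * Real.pi / 2) with hd
  have hdpos : 0 < d := sin_pos_aux ha0 hb1 hbpi
  set q : ℝ → ℂ := fun w => T 1 w ^ (-(α : ℂ)) with hq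
  have hqc : Continuous q := T_cpow_cont one_pos _
  have hTn : ∀ w, 1 ≤ ‖T 1 w‖ := fun w => T_norm_ge one_pos w
  have hqn : ∀ w, ‖q w‖ = ‖T 1 w‖ ^ (-α) := by
    intro w
    have := norm_T_cpow one_pos w (-α)
    push_cast at this
    exact this
  have hq1 : ∀ w, ‖q w‖ ≤ 1 := fun w => by
    rw [hqn]; exact Real.rpow_le_one_of_one_le_of_nonpos (hTn w) (by linarith)
  have hq0 : ∀ w, 0 < ‖q w‖ := fun w => by
    rw [hqn]; exact Real.rpow_pos_of_pos (by linarith [hTn w]) _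
  -- the lower bound
  have hlow : ∀ z : ℂ, b ≤ |arg z| → ∀ w, d * 1 ≤ ‖1 - z * q w‖ ∧ d * (‖z‖ * ‖q w‖) ≤ ‖1 - z * q w‖ := by
    intro z hz w
    have hw0 : T 1 w ^ (α : ℂ) ≠ 0 := by
      rw [Ne, cpow_eq_zero_iff]; simp [T_ne one_pos w]
    have hqw : q w = (T 1 w ^ (α : ℂ))⁻¹ := by rw [hq]; simp only; rw [cpow_neg]
    have hA := arg_cpow_le h0 h1 (t := T 1 w) (by simp [T_re])
    have hg := geom ha0 hb1 hbpi z _ hz hA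
    have e : ‖1 - z * q w‖ = ‖z - T 1 w ^ (α : ℂ)‖ * ‖q w‖ := by
      rw [← norm_mul, ← norm_neg, hqw]
      congr 1
      field_simp
      ring
    have e2 : ‖T 1 w ^ (α : ℂ)‖ * ‖q w‖ = 1 := by
      rw [← norm_mul, hqw, mul_inv_cancel₀ hw0, norm_one]
    rw [e]
    constructor
    · calc d * 1 = d * ‖T 1 w ^ (α : ℂ)‖ * ‖q w‖ := by rw [mul_assoc, e2]
        _ ≤ _ := by gcongr; exact hg.2
    · calc d * (‖z‖ * ‖q w‖) = d * ‖z‖ * ‖q w‖ := by ring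
        _ ≤ _ := by gcongr; exact hg.1
  have hne : ∀ z : ℂ, b ≤ |arg z| → ∀ w, 1 - z * q w ≠ 0 := by
    intro z hz w h
    have := (hlow z hz w).1
    rw [h, norm_zero] at this
    linarith
  set P : ℝ → ℂ := fun w => exp (T 1 w) * T 1 w ^ (-(β : ℂ)) with hP
  have hPc : Continuous P := (continuous_exp.comp (T_cont 1)).mul (T_cpow_cont one_pos _)
  have hPn : ∀ w, ‖P w‖ = Real.exp 1 * ‖T 1 w‖ ^ (-β) := by
    intro w
    have := norm_T_cpow one_pos w (-β)
    push_cast at this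
    rw [hP, norm_mul, norm_exp, T_re, this]
  have hPle : ∀ w, ‖P w‖ ≤ Real.exp 1 * ‖T 1 w‖ ^ (-2 : ℝ) := by
    intro w
    rw [hPn]
    gcongr
    · exact hTn w
    · linarith
  have hPi : Integrable P := Integrable.mono' ((integrable_T2 one_pos).const_mul (Real.exp 1))
    hPc.aestronglyMeasurable (Eventually.of_forall hPle)
  set G : ℂ → ℂ := fun z => ∫ w, P w * (1 - z * q w)⁻¹ with hG
  have hmeas : ∀ z : ℂ, b ≤ |arg z| → Continuous (fun w => P w * (1 - z * q w)⁻¹) := by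
    intro z hz
    exact hPc.mul (Continuous.inv₀ (by fun_prop) (hne z hz))
  have hinvle : ∀ z : ℂ, b ≤ |arg z| → ∀ w, ‖(1 - z * q w)⁻¹‖ ≤ d⁻¹ := by
    intro z hz w
    rw [norm_inv]
    have := (hlow z hz w).1
    exact inv_anti₀ hdpos (by linarith)
  have hGd : DifferentiableOn ℂ G (U b) := by
    intro z hz
    have hb0 : 0 ≤ b := by linarith
    have hnb : U b ∈ 𝓝 z := (isOpen_U hb0).mem_nhds hz
    have hz' : b ≤ |arg z| := le_of_lt hz
    have := hasDerivAt_integral_of_dominated_loc_of_deriv_le (μ := volume)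
      (F := fun (z : ℂ) (w : ℝ) => P w * (1 - z * q w)⁻¹)
      (F' := fun (z : ℂ) (w : ℝ) => P w * (q w * (1 - z * q w)⁻¹ * (1 - z * q w)⁻¹))
      (bound := fun w => ‖P w‖ * (1 * d⁻¹ * d⁻¹)) hnb
      (by filter_upwards [hnb] with y hy
          exact (hmeas y (le_of_lt hy)).aestronglyMeasurable) ?_ ?_ ?_
      (hPi.norm.mul_const _) ?_
    · exact this.2.differentiableAt.differentiableWithinAt
    · refine Integrable.mono' (hPi.norm.mul_const d⁻¹) (hmeas z hz').aestronglyMeasurable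
        (Eventually.of_forall fun w => ?_)
      rw [norm_mul]
      gcongr
      exact hinvle z hz' w
    · apply Continuous.aestronglyMeasurable
      have hi : Continuous (fun w => (1 - z * q w)⁻¹) :=
        Continuous.inv₀ (by fun_prop) (hne z hz')
      exact hPc.mul ((hqc.mul hi).mul hi)
    · refine Eventually.of_forall fun w y hy => ?_
      have hy' : b ≤ |arg y| := le_of_lt hy
      have := hinvle y hy' w
      have h1q := hq1 w
      have hqq := norm_mul (q w) (1 - y * q w)⁻¹
      rw [norm_mul, norm_mul (q w * _), hqq]
      gcongr
    · refine Eventually.of_forall fun w y hy => ?_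
      have hy' : b ≤ |arg y| := le_of_lt hy
      have hd1 : HasDerivAt (fun y : ℂ => 1 - y * q w) (-q w) y := by
        simpa using ((hasDerivAt_id y).mul_const (q w)).const_sub 1
      have hd2 := (hd1.inv (hne y hy' w)).const_mul (P w)
      refine hd2.congr_deriv ?_
      have := hne y hy' w
      field_simp
  have hsmall : ∀ z : ℂ, ‖z‖ < 1 → mittagLeffler α β z = G z := by
    intro z hz
    have hFn : ∀ (k : ℕ) (w : ℝ), ‖P w * (z * q w) ^ k‖ ≤ ‖z‖ ^ k * ‖P w‖ := by
      intro k w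
      rw [norm_mul, norm_pow, norm_mul z, mul_comm]
      gcongr
      exact mul_le_of_le_one_right (norm_nonneg _) (hq1 w)
    have hFc : ∀ k : ℕ, Continuous fun w => P w * (z * q w) ^ k := fun k => by fun_prop
    have hFi : ∀ k : ℕ, Integrable fun w => P w * (z * q w) ^ k := fun k =>
      Integrable.mono' (hPi.norm.const_mul (‖z‖ ^ k)) (hFc k).aestronglyMeasurable
        (Eventually.of_forall (hFn k))
    have hs : Summable fun k : ℕ => ∫ w, ‖P w * (z * q w) ^ k‖ := by
      refine Summable.of_nonneg_of_le (fun k => integral_nonneg fun w => norm_nonneg _)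
        (fun k => ?_) ((summable_geometric_of_lt_one (norm_nonneg z) hz).mul_right (∫ w, ‖P w‖))
      rw [← integral_const_mul]
      exact integral_mono (hFi k).norm (hPi.norm.const_mul _) (hFn k)
    have hsum := hasSum_integral_of_summable_integral_norm hFi hs
    have e1 : (fun w => ∑' k : ℕ, P w * (z * q w) ^ k) = fun w => P w * (1 - z * q w)⁻¹ := by
      ext w
      rw [tsum_mul_left, tsum_geometric_of_norm_lt_one]
      rw [norm_mul]
      calc _ ≤ ‖z‖ * 1 := by gcongr; exact hq1 w
        _ < 1 := by linarith
    rw [e1] at hsum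
    rw [hG]
    refine Eq.trans (tsum_congr fun k => ?_) hsum.tsum_eq
    have hk : 2 ≤ α * k + β := by
      have : 0 ≤ α * k := by positivity
      linarith
    rw [div_eq_mul_inv, inv_Gamma one_pos hk, ← integral_const_mul]
    congr 1
    ext w
    have : T 1 w ^ (-((α * k + β : ℝ) : ℂ)) = T 1 w ^ (-(β : ℂ)) * q w ^ k := by
      rw [hq]
      simp only
      rw [← cpow_nat_mul, ← cpow_add _ _ (T_ne one_pos w)]
      congr 1
      push_cast
      ring
    rw [this, mul_pow, hP]
    ring
  have hEq : EqOn (mittagLeffler α β) G (U b) := by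
    have hb0 : 0 ≤ b := by linarith
    have hUo := isOpen_U hb0
    have hz0 : (((-1/2 : ℝ)) : ℂ) ∈ U b := by
      show b < |arg _|
      rw [arg_ofReal_of_neg (by norm_num), abs_of_pos hp]
      exact hbpi
    refine ((ml_diff h0 β).differentiableOn.analyticOnNhd hUo).eqOn_of_preconnected_of_eventuallyEq
      (hGd.analyticOnNhd hUo) (isPreconnected_U hb0) hz0 ?_
    have : Metric.ball (0:ℂ) 1 ∈ 𝓝 (((-1/2 : ℝ)) : ℂ) := Metric.isOpen_ball.mem_nhds (by
      rw [Metric.mem_ball, dist_zero_right, norm_real]; norm_num)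
    filter_upwards [this] with z hz
    exact hsmall z (by simpa using hz)
  set J := ∫ w, ‖T 1 w‖ ^ (-2 : ℝ) with hJ
  have hJ0 : 0 ≤ J := integral_nonneg fun w => by positivity
  refine ⟨2 * d⁻¹ * Real.exp 1 * J + 1, by positivity, fun z hz => ?_⟩
  have hzb : z ∈ U b := lt_of_lt_of_le hb2 hz
  have hzb' : b ≤ |arg z| := le_of_lt hzb
  rw [hEq hzb, hG]
  have h := norm_integral_le_of_norm_le (f := fun w : ℝ => P w * (1 - z * q w)⁻¹)
    ((integrable_T2 one_pos).const_mul (2 * d⁻¹ * Real.exp 1 / (1 + ‖z‖)))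
    (Eventually.of_forall fun w => ?_)
  · rw [integral_const_mul] at h
    refine h.trans ?_
    rw [div_mul_eq_mul_div]
    gcongr
    linarith
  · have hl := hlow z hzb' w
    have hq1' := hq1 w
    have hq0' := hq0 w
    have hlo : d / 2 * ((1 + ‖z‖) * ‖q w‖) ≤ ‖1 - z * q w‖ := by
      nlinarith [norm_nonneg z]
    have hTw : 0 < ‖T 1 w‖ := by linarith [hTn w]
    have hin : ‖(1 - z * q w)⁻¹‖ ≤ 2 * d⁻¹ / (1 + ‖z‖) * ‖T 1 w‖ ^ α := by
      rw [norm_inv]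
      refine (inv_anti₀ (by positivity) hlo).trans (le_of_eq ?_)
      rw [hqn, Real.rpow_neg hTw.le]
      have : 0 < ‖T 1 w‖ ^ α := by positivity
      field_simp
    rw [norm_mul, hPn]
    calc _ ≤ Real.exp 1 * ‖T 1 w‖ ^ (-β) * (2 * d⁻¹ / (1 + ‖z‖) * ‖T 1 w‖ ^ α) := by gcongr
      _ = 2 * d⁻¹ * Real.exp 1 / (1 + ‖z‖) * ‖T 1 w‖ ^ (-β + α) := by
        rw [Real.rpow_add hTw]; ring
      _ ≤ _ := by
        gcongr
        · exact hTn w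
        · linarith

lemma step {α β : ℝ} (h0 : 0 < α)
    (ih : ∀ μ : ℝ, α * Real.pi / 2 < μ → μ < Real.pi →
      ∃ C : ℝ, 0 < C ∧ ∀ z : ℂ, μ ≤ |arg z| → ‖mittagLeffler α (β + 1) z‖ ≤ C / (1 + ‖z‖)) {μ : ℝ}
    (hμ1 : α * Real.pi / 2 < μ) (hμ2 : μ < Real.pi) :
    ∃ C : ℝ, 0 < C ∧ ∀ z : ℂ, μ ≤ |arg z| → ‖mittagLeffler α β z‖ ≤ C / (1 + ‖z‖) := by
  have hp := Real.pi_pos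
  have ha0 : 0 < α * Real.pi / 2 := by positivity
  obtain ⟨b, hb1, hb2⟩ := exists_between hμ1
  have hb0 : 0 ≤ b := by linarith
  obtain ⟨C, hC, hb⟩ := ih b hb1 (hb2.trans hμ2)
  have hspos := sin_pos_aux hb0 hb2 hμ2
  set ε := Real.sin (μ - b) / 2 with hε
  have hεpos : 0 < ε := by positivity
  have hε1 : ε ≤ 1 / 2 := by
    have := Real.sin_le_one (μ - b)
    rw [hε]; linarith
  refine ⟨|β| * C + α * (2 * C / ε), by positivity, fun z hz => ?_⟩
  have hz0 : z ≠ 0 := by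
    rintro rfl
    simp at hz
    linarith
  have hzn : 0 < ‖z‖ := norm_pos_iff.2 hz0
  have hder : ‖deriv (mittagLeffler α (β + 1)) z‖ ≤ (2 * C / (1 + ‖z‖)) / (ε * ‖z‖) := by
    refine norm_deriv_le_of_forall_mem_sphere_norm_le (by positivity)
      (ml_diff h0 (β + 1)).diffContOnCl fun w hw => ?_
    rw [mem_sphere_iff_norm, norm_sub_rev] at hw
    have hwb : b ≤ |arg w| := by
      by_contra hcon
      have := (geom hb0 hb2 hμ2 z w hz (not_le.1 hcon).le).1
      rw [hw] at this
      have : Real.sin (μ - b) ≤ ε := le_of_mul_le_mul_right this hzn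
      rw [hε] at this
      linarith
    refine (hb w hwb).trans ?_
    have : ‖z‖ ≤ ‖w‖ + ε * ‖z‖ := by
      rw [← hw, norm_sub_rev]
      exact norm_le_norm_add_norm_sub w z
    rw [div_le_div_iff₀ (by positivity) (by positivity)]
    have : ε * ‖z‖ ≤ 1 / 2 * ‖z‖ := by gcongr
    have h3 : 1 + ‖z‖ ≤ 2 * (1 + ‖w‖) := by linarith
    nlinarith
  rw [ml_rec h0 β z]
  have hbz := hb z (hb2.le.trans hz)
  calc _ ≤ |β| * ‖mittagLeffler α (β + 1) z‖ + α * ‖z‖ * ‖deriv (mittagLeffler α (β + 1)) z‖ := by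
        refine (norm_add_le _ _).trans (le_of_eq ?_)
        simp [abs_of_pos h0]
    _ ≤ |β| * (C / (1 + ‖z‖)) + α * ‖z‖ * ((2 * C / (1 + ‖z‖)) / (ε * ‖z‖)) := by gcongr
    _ = _ := by field_simp

lemma all {α : ℝ} (h0 : 0 < α) (h1 : α < 1) (n : ℕ) : ∀ β : ℝ, 3 ≤ β + n →
    ∀ μ : ℝ, α * Real.pi / 2 < μ → μ < Real.pi →
      ∃ C : ℝ, 0 < C ∧ ∀ z : ℂ, μ ≤ |arg z| → ‖mittagLeffler α β z‖ ≤ C / (1 + ‖z‖) := by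
  induction n with
  | zero => intro β hβ μ h h'; exact base h0 h1 (by simpa using hβ) h h'
  | succ n ih =>
    intro β hβ μ h h'
    exact step h0 (ih (β + 1) (by push_cast at hβ; linarith)) h h'

end MLaux

/-- For `0 < α < 1`, `β ∈ ℝ` and `απ/2 < μ < min{π, απ}`, there is a constant
`C = C(α, β, μ) > 0` with `|E_{α,β}(z)| ≤ C / (1 + |z|)` on the sector
`μ ≤ |arg z| ≤ π`. -/
theorem mittagLeffler_bound (α β μ : ℝ) (hα0 : 0 < α) (hα1 : α < 1)
    (hμ1 : α * Real.pi / 2 < μ) (hμ2 : μ < min Real.pi (α * Real.pi)) :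
    ∃ C : ℝ, 0 < C ∧ ∀ z : ℂ, z ≠ 0 →
      μ ≤ |Complex.arg z| → |Complex.arg z| ≤ Real.pi →
        ‖mittagLeffler α β z‖ ≤ C / (1 + ‖z‖) := by
  obtain ⟨n, hn⟩ := exists_nat_ge (3 - β)
  obtain ⟨C, hC, h⟩ := MLaux.all hα0 hα1 n β (by linarith) μ hμ1
    (lt_of_lt_of_le hμ2 (min_le_left _ _))
  exact ⟨C, hC, fun z _ hz _ => h z hz⟩
end

section
/- Let 0 < α < 1 and T > 0. There exist constants C₁ > 0 and C₂ > 0 depending only on α such that the following holds: for every μ > 0, every u₀ ∈ ℝ, and every continuous function f : [0, T] → ℝ, the function u(t) = u₀ E_{α,1}(−μ t^α) + ∫₀^t (t − τ)^{α−1} E_{α,α}(−μ (t − τ)^α) f(τ) dτ satisfies |u(t)| ≤ C₁ |u₀| + (C₂/μ) sup_{0 ≤ τ ≤ T} |f(τ)| for all t ∈ (0, T]. -/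
/-- The real Mittag-Leffler function `E_{α,β}(x) = ∑ₖ xᵏ / Γ(αk + β)` (with the
convention that `1/Γ` vanishes at the poles of `Γ`, which holds for Mathlib's
`Real.Gamma` since it vanishes at nonpositive integers). -/
noncomputable def mittagLefflerReal (α β x : ℝ) : ℝ :=
  ∑' k : ℕ, x ^ k / Real.Gamma (α * k + β)

open MeasureTheory Set Filter Topology

lemma mlAux_beta {a b t : ℝ} (ha : 0 < a) (hb : 0 < b) (ht : 0 < t) :
    ∫ s in (0:ℝ)..t, s ^ (a - 1) * (t - s) ^ (b - 1) =
      t ^ (a + b - 1) * (Real.Gamma a * Real.Gamma b / Real.Gamma (a + b)) := by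
  have h1 := Complex.betaIntegral_scaled (a : ℂ) (b : ℂ) ht
  rw [Complex.betaIntegral_eq_Gamma_mul_div _ _ (by simpa using ha) (by simpa using hb)] at h1
  rw [← Complex.ofReal_add, Complex.Gamma_ofReal, Complex.Gamma_ofReal, Complex.Gamma_ofReal] at h1
  have h2 : ∫ s in (0:ℝ)..t, (s : ℂ) ^ ((a : ℂ) - 1) * ((t : ℂ) - s) ^ ((b : ℂ) - 1) =
      ∫ s in (0:ℝ)..t, ((s ^ (a - 1) * (t - s) ^ (b - 1) : ℝ) : ℂ) := by
    apply intervalIntegral.integral_congr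
    intro s hs
    rw [uIcc_of_le ht.le] at hs
    simp only
    rw [Complex.ofReal_mul, Complex.ofReal_cpow hs.1, Complex.ofReal_cpow (sub_nonneg.2 hs.2)]
    push_cast
    rfl
  rw [h2, intervalIntegral.integral_ofReal] at h1
  have h3 : (t : ℂ) ^ (((a + b : ℝ) : ℂ) - 1) = ((t ^ (a + b - 1) : ℝ) : ℂ) := by
    rw [Complex.ofReal_cpow ht.le]; push_cast; rfl
  rw [h3] at h1
  exact_mod_cast h1

lemma mlAux_beta_int {a b t : ℝ} (ha : 0 < a) (hb : 0 < b) (ht : 0 < t) :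
    IntervalIntegrable (fun s : ℝ => s ^ (a - 1) * (t - s) ^ (b - 1)) volume 0 t := by
  by_contra h
  have h1 := intervalIntegral.integral_undef h
  rw [mlAux_beta ha hb ht] at h1
  have := Real.Gamma_pos_of_pos ha
  have := Real.Gamma_pos_of_pos hb
  have := Real.Gamma_pos_of_pos (add_pos ha hb)
  have : 0 < t ^ (a + b - 1) * (Real.Gamma a * Real.Gamma b / Real.Gamma (a + b)) := by positivity
  exact this.ne' h1

lemma mlAux_gamma_lower {x R : ℝ} (hx : 1 ≤ x) (hR : 0 < R) :
    R ^ (x - 1) * Real.exp (-R) ≤ Real.Gamma x := by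
  rw [Real.Gamma_eq_integral (by linarith), ← integral_exp_neg_Ioi, ← integral_const_mul]
  have hint := Real.GammaIntegral_convergent (s := x) (by linarith)
  calc ∫ y in Ioi R, R ^ (x - 1) * Real.exp (-y)
      ≤ ∫ y in Ioi R, Real.exp (-y) * y ^ (x - 1) := by
        apply setIntegral_mono_on
        · exact (integrableOn_exp_neg_Ioi R).const_mul _
        · exact hint.mono_set (Ioi_subset_Ioi hR.le)
        · exact measurableSet_Ioi
        · intro y hy
          rw [mul_comm]
          have : R ^ (x - 1) ≤ y ^ (x - 1) :=
            Real.rpow_le_rpow hR.le (le_of_lt hy) (by linarith)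
          gcongr
    _ ≤ ∫ y in Ioi (0:ℝ), Real.exp (-y) * y ^ (x - 1) := by
        apply setIntegral_mono_set hint
        · filter_upwards [ae_restrict_mem measurableSet_Ioi] with y hy
          have : (0:ℝ) < y := hy
          simp only [Pi.zero_apply]
          positivity
        · exact (Ioi_subset_Ioi hR.le).eventuallyLE

lemma mlAux_summable {α β : ℝ} (hα : 0 < α) (hβ : 0 < β) {x : ℝ} (hx : 0 ≤ x) :
    Summable fun k : ℕ => x ^ k / Real.Gamma (α * k + β) := by
  set R : ℝ := (2 * x + 1) ^ α⁻¹ with hRdef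
  have hR : 0 < R := by positivity
  have hRα : R ^ α = 2 * x + 1 := Real.rpow_inv_rpow (by positivity) hα.ne'
  have hgeo : Summable fun k : ℕ => (Real.exp R * R ^ (1 - β)) * (x / (2 * x + 1)) ^ k := by
    apply Summable.mul_left
    apply summable_geometric_of_lt_one (by positivity)
    rw [div_lt_one (by positivity)]; linarith
  refine Summable.of_norm_bounded_eventually_nat hgeo ?_
  obtain ⟨N, hN⟩ := exists_nat_gt (1 / α)
  filter_upwards [eventually_ge_atTop N] with k hk
  have hk1 : 1 ≤ α * k + β := by
    have : (1 / α) < k := hN.trans_le (by exact_mod_cast hk)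
    rw [div_lt_iff₀ hα] at this
    linarith
  have hG := mlAux_gamma_lower hk1 hR
  have hGpos : 0 < Real.Gamma (α * k + β) := Real.Gamma_pos_of_pos (by linarith)
  rw [Real.norm_of_nonneg (by positivity), div_le_iff₀ hGpos]
  have e1 : R ^ (α * k + β - 1) = (2 * x + 1) ^ k * (R ^ (1 - β))⁻¹ := by
    rw [← Real.rpow_neg hR.le, ← hRα, ← Real.rpow_natCast, ← Real.rpow_mul hR.le,
      ← Real.rpow_add hR]
    congr 1; ring
  rw [e1, Real.exp_neg] at hG
  calc x ^ k = Real.exp R * R ^ (1 - β) * (x / (2 * x + 1)) ^ k *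
        ((2 * x + 1) ^ k * (R ^ (1 - β))⁻¹ * (Real.exp R)⁻¹) := by
        have : R ^ (1 - β) ≠ 0 := by positivity
        have : 2 * x + 1 ≠ 0 := by positivity
        rw [div_pow]
        field_simp
    _ ≤ _ := by gcongr

lemma mlAux_gamma_pos {α β : ℝ} (hα : 0 < α) (hβ : 0 < β) (k : ℕ) :
    0 < Real.Gamma (α * k + β) := Real.Gamma_pos_of_pos (by positivity)

lemma mlAux_norm {α β : ℝ} (hα : 0 < α) (hβ : 0 < β) (x : ℝ) (k : ℕ) :
    ‖x ^ k / Real.Gamma (α * k + β)‖ = |x| ^ k / Real.Gamma (α * k + β) := by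
  rw [norm_div, norm_pow, Real.norm_of_nonneg (mlAux_gamma_pos hα hβ k).le, Real.norm_eq_abs]

lemma mlAux_summable' {α β : ℝ} (hα : 0 < α) (hβ : 0 < β) (x : ℝ) :
    Summable fun k : ℕ => x ^ k / Real.Gamma (α * k + β) := by
  apply Summable.of_norm
  simp_rw [mlAux_norm hα hβ]
  exact mlAux_summable hα hβ (abs_nonneg x)

lemma mlAux_cont {α β : ℝ} (hα : 0 < α) (hβ : 0 < β) : Continuous (mittagLefflerReal α β) := by
  rw [continuous_iff_continuousAt]
  intro x
  have h : ContinuousOn (mittagLefflerReal α β) (Icc (x - 1) (x + 1)) := by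
    unfold mittagLefflerReal
    refine continuousOn_tsum (u := fun k : ℕ => (|x| + 1) ^ k / Real.Gamma (α * k + β))
      (fun k => by fun_prop) (mlAux_summable hα hβ (by positivity)) ?_
    intro k y hy
    rw [mlAux_norm hα hβ]
    have := (mlAux_gamma_pos hα hβ k).le
    have : |y| ≤ |x| + 1 := by
      have h1 : |y - x| ≤ 1 := abs_le.2 ⟨by linarith [hy.1], by linarith [hy.2]⟩
      have := abs_add_le (y - x) x
      simp at this; linarith
    gcongr
  exact h.continuousAt (Icc_mem_nhds (by linarith) (by linarith))

lemma mlAux_rec {α β : ℝ} (hα : 0 < α) (hβ : 0 < β) (x : ℝ) :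
    mittagLefflerReal α β x = 1 / Real.Gamma β + x * mittagLefflerReal α (α + β) x := by
  unfold mittagLefflerReal
  rw [(mlAux_summable' hα hβ x).tsum_eq_zero_add, ← tsum_mul_left]
  congr 1
  · simp
  · congr 1; ext k
    rw [pow_succ]
    have : α * ((k + 1 : ℕ) : ℝ) + β = α * k + (α + β) := by push_cast; ring
    rw [this]; ring

/-- Convolution identity. -/
lemma mlAux_conv {α β μ t : ℝ} (hα : 0 < α) (hβ : 0 < β) (ht : 0 < t) (hμ : 0 < μ) :
    ∫ s in (0:ℝ)..t, s ^ (α - 1) * (t - s) ^ (β - 1) * mittagLefflerReal α α (-μ * s ^ α) =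
      Real.Gamma β * t ^ (α + β - 1) * mittagLefflerReal α (α + β) (-μ * t ^ α) := by
  set F : ℕ → ℝ → ℝ := fun k s =>
    ((-μ) ^ k / Real.Gamma (α * k + α)) * (s ^ ((α * k + α) - 1) * (t - s) ^ (β - 1)) with hF
  have hpos : ∀ k : ℕ, 0 < α * k + α := fun k => by positivity
  have hval : ∀ (c : ℝ) (k : ℕ), c ^ k / Real.Gamma (α * k + α) *
      (∫ s in (0:ℝ)..t, s ^ ((α * k + α) - 1) * (t - s) ^ (β - 1)) =
      Real.Gamma β * t ^ (α + β - 1) * ((c * t ^ α) ^ k / Real.Gamma (α * k + (α + β))) := by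
    intro c k
    rw [mlAux_beta (hpos k) hβ ht]
    have h1 := (mlAux_gamma_pos hα hα k).ne'
    have e1 : t ^ (α * k + α + β - 1) = t ^ (α + β - 1) * (t ^ α) ^ k := by
      rw [← Real.rpow_natCast, ← Real.rpow_mul ht.le, ← Real.rpow_add ht]
      congr 1; ring
    rw [e1, mul_pow, add_assoc (α * (k:ℝ)) α β]
    field_simp
  have hint : ∀ k, Integrable (F k) (volume.restrict (Ioc 0 t)) := fun k =>
    ((mlAux_beta_int (hpos k) hβ ht).1).const_mul _
  have hnorm : ∀ k, ∫ s in Ioc 0 t, ‖F k s‖ =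
      Real.Gamma β * t ^ (α + β - 1) * ((μ * t ^ α) ^ k / Real.Gamma (α * k + (α + β))) := by
    intro k
    rw [← hval, intervalIntegral.integral_of_le ht.le, ← integral_const_mul]
    apply setIntegral_congr_fun measurableSet_Ioc
    intro s hs
    have := (mlAux_gamma_pos hα hα k).le
    have h0 : 0 ≤ s ^ ((α * k + α) - 1) := Real.rpow_nonneg hs.1.le _
    have h0' : 0 ≤ (t - s) ^ (β - 1) := Real.rpow_nonneg (sub_nonneg.2 hs.2) _
    simp only [hF]
    rw [norm_mul, norm_div, norm_pow, norm_neg, Real.norm_of_nonneg hμ.le,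
      Real.norm_of_nonneg this, Real.norm_of_nonneg (mul_nonneg h0 h0')]
  have hsum := hasSum_integral_of_summable_integral_norm hint (by
    simp_rw [hnorm]
    exact (mlAux_summable hα (by positivity) (by positivity)).mul_left _)
  have h2 : ∫ s in (0:ℝ)..t, s ^ (α - 1) * (t - s) ^ (β - 1) * mittagLefflerReal α α (-μ * s ^ α)
      = ∫ s in Ioc 0 t, ∑' k, F k s := by
    rw [intervalIntegral.integral_of_le ht.le]
    apply setIntegral_congr_fun measurableSet_Ioc
    intro s hs
    simp only [hF, mittagLefflerReal]
    rw [← tsum_mul_left]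
    congr 1; ext k
    have e1 : s ^ (α * k + α - 1) = s ^ (α - 1) * (s ^ α) ^ k := by
      rw [← Real.rpow_natCast, ← Real.rpow_mul hs.1.le, ← Real.rpow_add hs.1]
      congr 1; ring
    rw [e1, mul_pow]; ring
  rw [h2, ← hsum.tsum_eq]
  unfold mittagLefflerReal
  rw [← tsum_mul_left]
  congr 1; ext k
  rw [← hval, intervalIntegral.integral_of_le ht.le, ← integral_const_mul]

lemma mlAux_e_cont {α μ : ℝ} (hα : 0 < α) :
    Continuous fun s : ℝ => mittagLefflerReal α α (-μ * s ^ α) :=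
  (mlAux_cont hα hα).comp (continuous_const.mul (Real.continuous_rpow_const hα.le))

lemma mlAux_conv_int {α β μ t : ℝ} (hα : 0 < α) (hβ : 0 < β) (ht : 0 < t) :
    IntervalIntegrable (fun s : ℝ => s ^ (α - 1) * (t - s) ^ (β - 1) *
      mittagLefflerReal α α (-μ * s ^ α)) volume 0 t :=
  (mlAux_beta_int hα hβ ht).mul_continuousOn (mlAux_e_cont hα).continuousOn

lemma mlAux_volterra {α μ t : ℝ} (hα : 0 < α) (hμ : 0 < μ) (ht : 0 < t) :
    μ * ∫ s in (0:ℝ)..t, s ^ (α - 1) * (t - s) ^ (α - 1) * mittagLefflerReal α α (-μ * s ^ α) =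
      t ^ (α - 1) - Real.Gamma α * (t ^ (α - 1) * mittagLefflerReal α α (-μ * t ^ α)) := by
  rw [mlAux_conv hα hα ht hμ, mlAux_rec hα hα]
  have hG := (Real.Gamma_pos_of_pos hα).ne'
  have e1 : t ^ (α + α - 1) = t ^ (α - 1) * t ^ α := by
    rw [← Real.rpow_add ht]; congr 1; ring
  rw [e1]
  field_simp
  ring

lemma mlAux_pos {α μ : ℝ} (hα : 0 < α) (hα1 : α < 1) (hμ : 0 < μ) {a : ℝ} (ha : 0 < a) :
    0 < mittagLefflerReal α α (-μ * a ^ α) := by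
  by_contra hneg
  push Not at hneg
  set e : ℝ → ℝ := fun s => mittagLefflerReal α α (-μ * s ^ α) with he
  have hec : Continuous e := mlAux_e_cont hα
  have hG := Real.Gamma_pos_of_pos hα
  have he0 : 0 < e 0 := by
    simp only [he]
    rw [Real.zero_rpow hα.ne', mul_zero, mlAux_rec hα hα]
    simp [hG]
  -- the first nonpositive point
  obtain ⟨t₀, ⟨ht₀m, ht₀e⟩, ht₀min⟩ : ∃ t₀, IsLeast (Icc 0 a ∩ {x | e x ≤ 0}) t₀ := by
    apply IsCompact.exists_isLeast
    · exact isCompact_Icc.inter_right (isClosed_le hec continuous_const)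
    · exact ⟨a, ⟨ha.le, le_refl a⟩, hneg⟩
  have ht₀e : e t₀ ≤ 0 := ht₀e
  have ht₀ : 0 < t₀ := by
    rcases ht₀m.1.lt_or_eq with h | h
    · exact h
    · rw [← h] at ht₀e; linarith
  have hbefore : ∀ s, 0 ≤ s → s < t₀ → 0 < e s := by
    intro s hs0 hs
    by_contra h
    push Not at h
    have := ht₀min ⟨⟨hs0, hs.le.trans ht₀m.2⟩, h⟩
    linarith
  set r : ℝ → ℝ := fun s => s ^ (α - 1) * e s with hr
  -- key inequality
  have key : ∀ t, 0 < t → t < t₀ → Real.Gamma α * r t * (t₀ / t) ^ (α - 1) ≤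
      μ * ∫ s in t..t₀, s ^ (α - 1) * (t₀ - s) ^ (α - 1) * e s := by
    intro t ht htt
    have hI := mlAux_conv_int (μ := μ) hα hα ht₀
    have hIt := mlAux_conv_int (μ := μ) hα hα ht
    have hI1 := hI.mono_set (c := 0) (d := t) (by
      rw [uIcc_of_le ht.le, uIcc_of_le ht₀.le]; exact Icc_subset_Icc le_rfl htt.le)
    have hI2 := hI.mono_set (c := t) (d := t₀) (by
      rw [uIcc_of_le htt.le, uIcc_of_le ht₀.le]; exact Icc_subset_Icc ht.le le_rfl)
    have hadd := intervalIntegral.integral_add_adjacent_intervals hI1 hI2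
    have v0 := mlAux_volterra hα hμ ht₀
    have v1 := mlAux_volterra hα hμ ht
    have hcmp : ∫ s in (0:ℝ)..t, s ^ (α - 1) * (t₀ - s) ^ (α - 1) * e s ≤
        (t₀ / t) ^ (α - 1) * ∫ s in (0:ℝ)..t, s ^ (α - 1) * (t - s) ^ (α - 1) * e s := by
      rw [← intervalIntegral.integral_const_mul]
      apply intervalIntegral.integral_mono_on_of_le_Ioo ht.le hI1 (hIt.const_mul _)
      intro s hs
      have h1 : (t₀ - s) ^ (α - 1) ≤ (t₀ / t) ^ (α - 1) * (t - s) ^ (α - 1) := by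
        have hts : 0 < t - s := by linarith [hs.2]
        rw [← Real.mul_rpow (by positivity) hts.le]
        apply Real.rpow_le_rpow_of_nonpos (by positivity) _ (by linarith)
        rw [div_mul_eq_mul_div, div_le_iff₀ ht]
        nlinarith [hs.1]
      have h2 := (hbefore s hs.1.le (hs.2.trans htt)).le
      have h3 : 0 ≤ s ^ (α - 1) := Real.rpow_nonneg hs.1.le _
      calc s ^ (α - 1) * (t₀ - s) ^ (α - 1) * e s
          ≤ s ^ (α - 1) * ((t₀ / t) ^ (α - 1) * (t - s) ^ (α - 1)) * e s := by gcongr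
        _ = _ := by ring
    have hk : (t₀ / t) ^ (α - 1) * t ^ (α - 1) = t₀ ^ (α - 1) := by
      rw [← Real.mul_rpow (by positivity) ht.le, div_mul_cancel₀ _ ht.ne']
    have h4 : Real.Gamma α * (t₀ ^ (α - 1) * e t₀) ≤ 0 := by
      have : 0 ≤ t₀ ^ (α - 1) := by positivity
      have := mul_nonpos_of_nonneg_of_nonpos this ht₀e
      exact mul_nonpos_of_nonneg_of_nonpos hG.le this
    have hcmp' := mul_le_mul_of_nonneg_left hcmp hμ.le
    have e5 : μ * ((t₀ / t) ^ (α - 1) * ∫ s in (0:ℝ)..t, s ^ (α - 1) * (t - s) ^ (α - 1) * e s)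
        = t₀ ^ (α - 1) - Real.Gamma α * r t * (t₀ / t) ^ (α - 1) := by
      rw [mul_left_comm, v1, ← hk]
      simp only [hr, he]; ring
    rw [e5] at hcmp'
    rw [← hadd, mul_add] at v0
    change μ * (∫ s in (0:ℝ)..t, s ^ (α - 1) * (t₀ - s) ^ (α - 1) * e s) +
      μ * (∫ s in t..t₀, s ^ (α - 1) * (t₀ - s) ^ (α - 1) * e s) =
      t₀ ^ (α - 1) - Real.Gamma α * (t₀ ^ (α - 1) * e t₀) at v0
    linarith
  -- choose `t₁` close to `t₀`
  obtain ⟨t₁, ht₁h, ht₁lt, ht₁s⟩ : ∃ t₁, t₀ / 2 < t₁ ∧ t₁ < t₀ ∧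
      μ * ((t₀ - t₁) ^ α / α) < Real.Gamma α / 2 := by
    have hc : Continuous fun x : ℝ => μ * ((t₀ - x) ^ α / α) :=
      continuous_const.mul
        (((Real.continuous_rpow_const hα.le).comp (continuous_const.sub continuous_id)).div_const _)
    have hlim : ∀ᶠ x in 𝓝 t₀, μ * ((t₀ - x) ^ α / α) < Real.Gamma α / 2 := by
      apply hc.continuousAt.eventually_lt_const
      simp [Real.zero_rpow hα.ne', hG]
    have h1 : ∀ᶠ x in 𝓝 t₀, t₀ / 2 < x := lt_mem_nhds (by linarith)
    have h2 := ((h1.and hlim).filter_mono (nhdsWithin_le_nhds (s := Iio t₀))).and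
      self_mem_nhdsWithin
    obtain ⟨x, ⟨hx1, hx2⟩, hx3⟩ := h2.exists
    exact ⟨x, hx1, hx3, hx2⟩
  have ht₁0 : 0 < t₁ := by linarith
  have hrc : ContinuousOn r (Icc t₁ t₀) := by
    apply ContinuousOn.mul _ hec.continuousOn
    intro x hx
    exact (Real.continuousAt_rpow_const _ _ (Or.inl (by linarith [hx.1]))).continuousWithinAt
  obtain ⟨p, hpm, hpmax⟩ := isCompact_Icc.exists_isMaxOn (nonempty_Icc.2 ht₁lt.le) hrc
  have hr1 : 0 < r t₁ := mul_pos (by positivity) (hbefore t₁ ht₁0.le ht₁lt)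
  have hrp : 0 < r p := hr1.trans_le (hpmax ⟨le_rfl, ht₁lt.le⟩)
  have hp0 : 0 < p := by linarith [hpm.1]
  have hplt : p < t₀ := by
    rcases hpm.2.lt_or_eq with h | h
    · exact h
    · exfalso
      have : r p ≤ 0 := by
        simp only [hr]
        rw [h]
        exact mul_nonpos_of_nonneg_of_nonpos (by positivity) ht₀e
      linarith
  have hkey := key p hp0 hplt
  have hhalf : (1:ℝ) / 2 ≤ (t₀ / p) ^ (α - 1) := by
    have h1 : 1 ≤ t₀ / p := by rw [le_div_iff₀ hp0]; linarith
    have h2 : t₀ / p ≤ 2 := by rw [div_le_iff₀ hp0]; linarith [hpm.1]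
    calc (1:ℝ) / 2 = 2 ^ (-1 : ℝ) := by rw [Real.rpow_neg_one]; norm_num
      _ ≤ (t₀ / p) ^ (-1 : ℝ) := Real.rpow_le_rpow_of_nonpos (by positivity) h2 (by norm_num)
      _ ≤ (t₀ / p) ^ (α - 1) := Real.rpow_le_rpow_of_exponent_le h1 (by linarith)
  have hker : ∫ s in p..t₀, (t₀ - s) ^ (α - 1) = (t₀ - p) ^ α / α := by
    rw [intervalIntegral.integral_comp_sub_left (fun x => x ^ (α - 1)) t₀, sub_self,
      integral_rpow (Or.inl (by linarith))]
    simp [Real.zero_rpow hα.ne']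
  have hkerI : IntervalIntegrable (fun s : ℝ => (t₀ - s) ^ (α - 1)) volume p t₀ := by
    have h := (intervalIntegral.intervalIntegrable_rpow' (a := t₀ - p) (b := 0) (r := α - 1)
      (by linarith)).comp_sub_left t₀
    simpa using h
  have hup : ∫ s in p..t₀, s ^ (α - 1) * (t₀ - s) ^ (α - 1) * e s ≤
      r p * ((t₀ - p) ^ α / α) := by
    rw [← hker, ← intervalIntegral.integral_const_mul]
    apply intervalIntegral.integral_mono_on_of_le_Ioo hplt.le
    · exact (mlAux_conv_int (μ := μ) hα hα ht₀).mono_set (by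
        rw [uIcc_of_le hplt.le, uIcc_of_le ht₀.le]; exact Icc_subset_Icc hp0.le le_rfl)
    · exact hkerI.const_mul _
    · intro s hs
      have h1 : r s ≤ r p := hpmax ⟨hpm.1.trans hs.1.le, hs.2.le⟩
      have h2 : 0 ≤ (t₀ - s) ^ (α - 1) := Real.rpow_nonneg (by linarith [hs.2]) _
      calc s ^ (α - 1) * (t₀ - s) ^ (α - 1) * e s = r s * (t₀ - s) ^ (α - 1) := by
            simp only [hr]; ring
        _ ≤ _ := by gcongr
  have hmono : (t₀ - p) ^ α ≤ (t₀ - t₁) ^ α :=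
    Real.rpow_le_rpow (by linarith) (by linarith [hpm.1]) hα.le
  have hfin : Real.Gamma α * r p * (1 / 2) < Real.Gamma α * r p * (1 / 2) := by
    calc Real.Gamma α * r p * (1 / 2) ≤ Real.Gamma α * r p * (t₀ / p) ^ (α - 1) := by gcongr
      _ ≤ _ := hkey
      _ ≤ μ * (r p * ((t₀ - p) ^ α / α)) := by gcongr
      _ ≤ μ * (r p * ((t₀ - t₁) ^ α / α)) := by gcongr
      _ = r p * (μ * ((t₀ - t₁) ^ α / α)) := by ring
      _ < r p * (Real.Gamma α / 2) := by gcongr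
      _ = _ := by ring
  exact lt_irrefl _ hfin

lemma mlAux_r_int {α μ t : ℝ} (hα : 0 < α) (ht : 0 < t) :
    IntervalIntegrable (fun s : ℝ => s ^ (α - 1) * mittagLefflerReal α α (-μ * s ^ α))
      volume 0 t := by
  simpa using mlAux_conv_int (μ := μ) hα one_pos ht

lemma mlAux_r_integral {α μ t : ℝ} (hα : 0 < α) (hμ : 0 < μ) (ht : 0 < t) :
    μ * ∫ s in (0:ℝ)..t, s ^ (α - 1) * mittagLefflerReal α α (-μ * s ^ α) =
      1 - mittagLefflerReal α 1 (-μ * t ^ α) := by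
  have h := mlAux_conv hα one_pos ht hμ
  simp only [sub_self, Real.rpow_zero, mul_one, Real.Gamma_one, one_mul, add_sub_cancel_right] at h
  rw [h, mlAux_rec hα one_pos]
  simp only [Real.Gamma_one]
  ring

lemma mlAux_r_integral_le {α μ t : ℝ} (hα : 0 < α) (hα1 : α < 1) (hμ : 0 < μ) (ht : 0 < t) :
    μ * ∫ s in (0:ℝ)..t, s ^ (α - 1) * mittagLefflerReal α α (-μ * s ^ α) ≤ 1 := by
  have v := mlAux_volterra hα hμ ht
  have hk : 0 < t ^ (α - 1) := by positivity
  have hG := Real.Gamma_pos_of_pos hα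
  have hp := mlAux_pos hα hα1 hμ ht
  have hle : t ^ (α - 1) * ∫ s in (0:ℝ)..t, s ^ (α - 1) * mittagLefflerReal α α (-μ * s ^ α) ≤
      ∫ s in (0:ℝ)..t, s ^ (α - 1) * (t - s) ^ (α - 1) * mittagLefflerReal α α (-μ * s ^ α) := by
    rw [← intervalIntegral.integral_const_mul]
    apply intervalIntegral.integral_mono_on_of_le_Ioo ht.le ((mlAux_r_int hα ht).const_mul _)
      (mlAux_conv_int hα hα ht)
    intro s hs
    have h1 : t ^ (α - 1) ≤ (t - s) ^ (α - 1) :=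
      Real.rpow_le_rpow_of_nonpos (by linarith [hs.2]) (by linarith [hs.1]) (by linarith)
    have h2 := (mlAux_pos hα hα1 hμ hs.1).le
    have h3 : 0 ≤ s ^ (α - 1) := Real.rpow_nonneg hs.1.le _
    calc _ = s ^ (α - 1) * t ^ (α - 1) * mittagLefflerReal α α (-μ * s ^ α) := by ring
      _ ≤ _ := by gcongr
  have h4 := mul_le_mul_of_nonneg_left hle hμ.le
  rw [v] at h4
  have h5 : 0 < Real.Gamma α * (t ^ (α - 1) * mittagLefflerReal α α (-μ * t ^ α)) := by positivity
  refine le_of_mul_le_mul_left ?_ hk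
  rw [mul_left_comm, mul_one]
  linarith

/-- For `0 < α < 1` there are constants `C₁, C₂ > 0` depending only on `α` such
that for every `T > 0`, `μ > 0`, `u₀ ∈ ℝ` and continuous `f : [0,T] → ℝ`, the
mild-solution coefficient
`u(t) = u₀ E_{α,1}(−μ tᵅ) + ∫₀ᵗ (t−τ)^{α−1} E_{α,α}(−μ(t−τ)ᵅ) f(τ) dτ`
satisfies `|u(t)| ≤ C₁|u₀| + (C₂/μ) sup_{0≤τ≤T} |f(τ)|` on `(0, T]`. -/
theorem mild_solution_coefficient_bound (α : ℝ) (hα0 : 0 < α) (hα1 : α < 1) :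
    ∃ C₁ : ℝ, 0 < C₁ ∧ ∃ C₂ : ℝ, 0 < C₂ ∧
      ∀ T : ℝ, 0 < T → ∀ μ : ℝ, 0 < μ → ∀ u₀ : ℝ, ∀ f : ℝ → ℝ,
        ContinuousOn f (Set.Icc 0 T) →
        ∀ t ∈ Set.Ioc (0:ℝ) T,
          |u₀ * mittagLefflerReal α 1 (-μ * t ^ α) +
              ∫ τ in (0:ℝ)..t,
                (t - τ) ^ (α - 1) * mittagLefflerReal α α (-μ * (t - τ) ^ α) * f τ|
            ≤ C₁ * |u₀| + (C₂ / μ) * ⨆ τ : Set.Icc (0:ℝ) T, |f τ| := by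
  refine ⟨1, one_pos, 1, one_pos, ?_⟩
  intro T hT μ hμ u₀ f hf t ht
  set M : ℝ := ⨆ τ : Set.Icc (0:ℝ) T, |f τ| with hM
  have hbdd : BddAbove (Set.range fun τ : Set.Icc (0:ℝ) T => |f τ|) := by
    have := isCompact_Icc.bddAbove_image hf.abs
    rwa [Set.image_eq_range] at this
  have hfM : ∀ τ ∈ Set.Icc (0:ℝ) T, |f τ| ≤ M := fun τ hτ => le_ciSup hbdd ⟨τ, hτ⟩
  have hM0 : 0 ≤ M := (abs_nonneg _).trans (hfM 0 ⟨le_rfl, hT.le⟩)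
  have hr0 : ∀ s, 0 < s → 0 ≤ s ^ (α - 1) * mittagLefflerReal α α (-μ * s ^ α) := fun s hs =>
    mul_nonneg (Real.rpow_nonneg hs.le _) (mlAux_pos hα0 hα1 hμ hs).le
  have hle := mlAux_r_integral_le hα0 hα1 hμ ht.1
  have heq := mlAux_r_integral hα0 hμ ht.1
  have hI0 : 0 ≤ ∫ s in (0:ℝ)..t, s ^ (α - 1) * mittagLefflerReal α α (-μ * s ^ α) := by
    rw [intervalIntegral.integral_of_le ht.1.le]
    exact setIntegral_nonneg measurableSet_Ioc fun s hs => hr0 s hs.1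
  have hE : |mittagLefflerReal α 1 (-μ * t ^ α)| ≤ 1 := by
    have := mul_nonneg hμ.le hI0
    rw [abs_le]; constructor <;> linarith
  have hint : IntervalIntegrable (fun τ => (t - τ) ^ (α - 1) *
      mittagLefflerReal α α (-μ * (t - τ) ^ α)) volume 0 t := by
    have h := ((mlAux_r_int (μ := μ) hα0 ht.1).comp_sub_left t).symm
    simpa using h
  have h2 : |∫ τ in (0:ℝ)..t,
      (t - τ) ^ (α - 1) * mittagLefflerReal α α (-μ * (t - τ) ^ α) * f τ| ≤ 1 / μ * M := by
    have hb := intervalIntegral.norm_integral_le_of_norm_le (μ := volume) ht.1.le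
      (f := fun τ => (t - τ) ^ (α - 1) * mittagLefflerReal α α (-μ * (t - τ) ^ α) * f τ)
      (g := fun τ => (t - τ) ^ (α - 1) * mittagLefflerReal α α (-μ * (t - τ) ^ α) * M) (by
        have hne : ∀ᵐ τ : ℝ, τ ≠ t := by simp [ae_iff]
        filter_upwards [hne] with τ hτt hτ
        have hlt : τ < t := lt_of_le_of_ne hτ.2 hτt
        rw [norm_mul, Real.norm_of_nonneg (hr0 (t - τ) (sub_pos.2 hlt)), Real.norm_eq_abs]
        exact mul_le_mul_of_nonneg_left (hfM τ ⟨hτ.1.le, hτ.2.trans ht.2⟩)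
          (hr0 (t - τ) (sub_pos.2 hlt))) (hint.mul_const M)
    rw [intervalIntegral.integral_mul_const, intervalIntegral.integral_comp_sub_left
      (fun s => s ^ (α - 1) * mittagLefflerReal α α (-μ * s ^ α)) t, sub_self, sub_zero] at hb
    refine hb.trans (mul_le_mul_of_nonneg_right ?_ hM0)
    rw [le_div_iff₀ hμ]; linarith
  calc _ ≤ |u₀ * mittagLefflerReal α 1 (-μ * t ^ α)| + _ := abs_add_le _ _
    _ ≤ 1 * |u₀| + 1 / μ * M := by
      refine add_le_add ?_ h2
      rw [abs_mul, mul_comm]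
      exact mul_le_mul_of_nonneg_right hE (abs_nonneg _)
end
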